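/- arXiv:1611.10186 — 2 statements merged into one kernel-verified Lean document; each statement's English description precedes it below -/
import Mathlib

section
/- For an odd prime p, an integer t ≥ 1, and an integer c with gcd(p, c) = 1, the quadratic Gauss sum ∑_{r=0}^{p^t - 1} e(c r² / p^t) equals p^{t/2} if t is even, and equals p^{t/2} · (c/p) · χ_p if t is odd, where (c/p) is the Legendre symbol, χ_p = 1 if p ≡ 1 (mod 4) and χ_p = √(-1) if p ≡ 3 (mod 4), and e(x) = exp(2πix). -/
open Complex Finset

noncomputable def e (x : ℝ) : ℂ := Complex.exp (2 * Real.pi * Complex.I * x)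

noncomputable def qF (q : ℂ) (n : ℕ) : ℂ := ∏ k ∈ Finset.range n, (1 - q ^ (k + 1))

lemma qF_succ (q : ℂ) (n : ℕ) : qF q (n + 1) = qF q n * (1 - q ^ (n + 1)) :=
  Finset.prod_range_succ _ _

noncomputable def qB (q : ℂ) (n j : ℕ) : ℂ := qF q n / (qF q j * qF q (n - j))

noncomputable def qS (q : ℂ) (n : ℕ) : ℂ := ∑ j ∈ Finset.range (n + 1), (-1) ^ j * qB q n j

lemma qF_ne (q : ℂ) (N : ℕ) (h : ∀ k, 0 < k → k ≤ N → q ^ k ≠ 1) (n : ℕ) (hn : n ≤ N) :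
    qF q n ≠ 0 := by
  unfold qF
  rw [Finset.prod_ne_zero_iff]
  intro k hk
  rw [Finset.mem_range] at hk
  exact sub_ne_zero.mpr (h (k + 1) (by omega) (by omega)).symm

lemma qB_rec (q : ℂ) (n j : ℕ) (hj : j ≤ n) (h : ∀ k, 0 < k → k ≤ n + 2 → q ^ k ≠ 1) :
    qB q (n + 2) (j + 1) = -(1 - q ^ (n + 1)) * qB q n j + qB q (n + 1) j
      + qB q (n + 1) (j + 1) := by
  obtain ⟨i, rfl⟩ := Nat.exists_eq_add_of_le hj
  unfold qB
  rw [show j + i + 2 - (j + 1) = i + 1 by omega, show j + i - j = i by omega,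
    show j + i + 1 - j = i + 1 by omega, show j + i + 1 - (j + 1) = i by omega,
    qF_succ q (j + i + 1), qF_succ q (j + i), qF_succ q j, qF_succ q i]
  have h1 := qF_ne q _ h j (by omega)
  have h2 := qF_ne q _ h i (by omega)
  have h3 : (1 - q ^ (j + 1)) ≠ 0 := sub_ne_zero.mpr (h (j + 1) (by omega) (by omega)).symm
  have h4 : (1 - q ^ (i + 1)) ≠ 0 := sub_ne_zero.mpr (h (i + 1) (by omega) (by omega)).symm
  field_simp
  ring

lemma qB_zero (q : ℂ) (n : ℕ) (h : qF q n ≠ 0) : qB q n 0 = 1 := by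
  simp only [qB, Nat.sub_zero]
  rw [show qF q 0 = 1 by simp [qF], one_mul, div_self h]

lemma qB_self (q : ℂ) (n : ℕ) (h : qF q n ≠ 0) : qB q n n = 1 := by
  simp only [qB, Nat.sub_self]
  rw [show qF q 0 = 1 by simp [qF], mul_one, div_self h]

lemma qS_rec (q : ℂ) (n : ℕ) (h : ∀ k, 0 < k → k ≤ n + 2 → q ^ k ≠ 1) :
    qS q (n + 2) = (1 - q ^ (n + 1)) * qS q n := by
  have tel : ∀ m, m ≤ n + 1 → ∑ j ∈ Finset.range m, (-1) ^ (j + 1) * qB q (n + 2) (j + 1)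
      = (1 - q ^ (n + 1)) * ∑ j ∈ Finset.range m, (-1) ^ j * qB q n j
        + ((-1) ^ m * qB q (n + 1) m - 1) := by
    intro m
    induction m with
    | zero => intro _; simp [qB_zero q (n + 1) (qF_ne q _ h _ (by omega))]
    | succ m ih =>
      intro hm
      rw [Finset.sum_range_succ, ih (by omega), Finset.sum_range_succ, qB_rec q n m (by omega) h]
      ring
  unfold qS
  rw [Finset.sum_range_succ', Finset.sum_range_succ, tel (n + 1) le_rfl,
    qB_zero q _ (qF_ne q _ h _ le_rfl), qB_self q _ (qF_ne q _ h _ le_rfl),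
    qB_self q _ (qF_ne q _ h _ (by omega))]
  ring

lemma qS_prod (q : ℂ) (m : ℕ) (h : ∀ k, 0 < k → k ≤ 2 * m → q ^ k ≠ 1) :
    qS q (2 * m) = ∏ k ∈ Finset.range m, (1 - q ^ (2 * k + 1)) := by
  induction m with
  | zero => simp [qS, qB, qF]
  | succ m ih =>
    rw [Finset.prod_range_succ, ← ih (fun k h0 hk => h k h0 (by omega))]
    rw [show 2 * (m + 1) = 2 * m + 2 by ring] at h ⊢
    rw [qS_rec q (2 * m) h, mul_comm]

open ZMod in
lemma psi_pow (p : ℕ) [NeZero p] (a : ZMod p) (k : ℕ) :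
    (stdAddChar a : ℂ) ^ k = stdAddChar ((k : ZMod p) * a) := by
  rw [← nsmul_eq_mul, AddChar.map_nsmul_eq_pow]

lemma sum_range_zmod (p : ℕ) [NeZero p] (f : ZMod p → ℂ) :
    ∑ r ∈ Finset.range p, f (r : ZMod p) = ∑ x : ZMod p, f x := by
  refine Finset.sum_nbij' (fun r => (r : ZMod p)) ZMod.val ?_ ?_ ?_ ?_ ?_
  · simp
  · intro a _; simpa using ZMod.val_lt a
  · intro a ha; exact ZMod.val_cast_of_lt (Finset.mem_range.mp ha)
  · intro a _; simp
  · simp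

open ZMod in
lemma gauss_prod (p m : ℕ) [Fact p.Prime] (hp : p = 2 * m + 1) :
    ∑ x : ZMod p, (stdAddChar (x ^ 2) : ℂ) =
      ∏ k ∈ Finset.range m, ((stdAddChar (((2 * k + 1 : ℕ)) : ZMod p) : ℂ)
        - stdAddChar (-((2 * k + 1 : ℕ) : ZMod p))) := by
  have hm0 : ((2 * m + 1 : ℕ) : ZMod p) = 0 := by rw [← hp]; simp
  have hm : (2 : ZMod p) * m + 1 = 0 := by exact_mod_cast hm0
  have h2 : (2 : ZMod p) ≠ 0 := by
    intro h; rw [h] at hm; simp at hm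
  set q : ℂ := stdAddChar (-2 : ZMod p) with hq
  have hqk : ∀ k : ℕ, q ^ k = stdAddChar (-2 * (k : ZMod p)) := by
    intro k; rw [hq, psi_pow, mul_comm]
  have hone : ∀ k, 0 < k → k ≤ 2 * m → q ^ k ≠ 1 := by
    intro k h0 hk h1
    rw [hqk, ← AddChar.map_zero_eq_one (stdAddChar : AddChar (ZMod p) ℂ)] at h1
    have := injective_stdAddChar h1
    have h3 : (k : ZMod p) = 0 := by simpa [h2] using this
    rw [ZMod.natCast_eq_zero_iff] at h3
    have := Nat.le_of_dvd h0 h3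
    omega
  have hterm : ∀ j, j ≤ 2 * m → (-1) ^ j * qB q (2 * m) j
      = (stdAddChar ((j : ZMod p) * ((j : ZMod p) + 1)) : ℂ) := by
    intro j
    induction j with
    | zero => intro _; simp [qB_zero q _ (qF_ne q _ hone _ le_rfl)]
    | succ j ih =>
      intro hj
      have ih := ih (by omega)
      obtain ⟨i, hi⟩ := Nat.exists_eq_add_of_le hj
      have e1 : qB q (2 * m) (j + 1) * (1 - q ^ (j + 1)) = qB q (2 * m) j * (1 - q ^ (i + 1)) := by
        unfold qB
        rw [show 2 * m - (j + 1) = i by omega, show 2 * m - j = i + 1 by omega,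
          qF_succ q j, qF_succ q i]
        have h1 := qF_ne q _ hone j (by omega)
        have h2 := qF_ne q _ hone i (by omega)
        have h3 : (1 - q ^ (j + 1)) ≠ 0 :=
          sub_ne_zero.mpr (hone (j + 1) (by omega) (by omega)).symm
        have h4 : (1 - q ^ (i + 1)) ≠ 0 :=
          sub_ne_zero.mpr (hone (i + 1) (by omega) (by omega)).symm
        field_simp
      have h3 : (1 - q ^ (j + 1)) ≠ 0 :=
        sub_ne_zero.mpr (hone (j + 1) (by omega) (by omega)).symm
      have hi' : (i : ZMod p) + 1 = - (j + 1) := by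
        have : ((2 * m : ℕ) : ZMod p) = ((j + 1 + i : ℕ) : ZMod p) := by rw [hi]
        push_cast at this
        linear_combination hm - this
      apply mul_right_cancel₀ h3
      have e2 : (1 - q ^ (i + 1)) = - stdAddChar (2 * ((j : ZMod p) + 1)) * (1 - q ^ (j + 1)) := by
        rw [hqk, hqk, mul_sub, neg_mul (stdAddChar _) (stdAddChar _), ← AddChar.map_add_eq_mul]
        push_cast
        rw [hi', show 2 * ((j : ZMod p) + 1) + -2 * (j + 1) = 0 by ring, AddChar.map_zero_eq_one,
          show -2 * -((j : ZMod p) + 1) = 2 * (j + 1) by ring]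
        ring
      calc (-1) ^ (j + 1) * qB q (2 * m) (j + 1) * (1 - q ^ (j + 1))
          = (-1) ^ (j + 1) * (qB q (2 * m) (j + 1) * (1 - q ^ (j + 1))) := by ring
        _ = ((-1) ^ j * qB q (2 * m) j) * stdAddChar (2 * ((j : ZMod p) + 1))
            * (1 - q ^ (j + 1)) := by rw [e1, e2]; ring
        _ = _ := by
          rw [ih, ← AddChar.map_add_eq_mul]
          congr 2
          push_cast; ring
  have hS := qS_prod q m hone
  unfold qS at hS
  rw [Finset.sum_congr rfl (fun j hj => hterm j (by rw [Finset.mem_range] at hj; omega)), ← hp,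
    sum_range_zmod p (fun x => (stdAddChar (x * (x + 1)) : ℂ))] at hS
  have hsum : ∑ x : ZMod p, (stdAddChar (x * (x + 1)) : ℂ)
      = stdAddChar (-(m : ZMod p) ^ 2) * ∑ x : ZMod p, (stdAddChar (x ^ 2) : ℂ) := by
    rw [Finset.mul_sum, ← Equiv.sum_comp (Equiv.subRight (m : ZMod p))
      (fun x => (stdAddChar (-(m : ZMod p) ^ 2) * stdAddChar (x ^ 2) : ℂ))]
    refine Finset.sum_congr rfl fun x _ => ?_
    rw [← AddChar.map_add_eq_mul]
    congr 1
    simp only [Equiv.subRight_apply]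
    linear_combination x * hm
  have hprod : ∀ n : ℕ, ∏ k ∈ Finset.range n, (1 - q ^ (2 * k + 1)) =
      stdAddChar (-(n : ZMod p) ^ 2) *
      ∏ k ∈ Finset.range n, ((stdAddChar (((2 * k + 1 : ℕ)) : ZMod p) : ℂ)
        - stdAddChar (-((2 * k + 1 : ℕ) : ZMod p))) := by
    intro n
    induction n with
    | zero => simp
    | succ n ih =>
      rw [Finset.prod_range_succ, ih, Finset.prod_range_succ]
      have e3 : 1 - q ^ (2 * n + 1) = stdAddChar (-((2 * n + 1 : ℕ) : ZMod p)) *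
          ((stdAddChar (((2 * n + 1 : ℕ)) : ZMod p) : ℂ)
        - stdAddChar (-((2 * n + 1 : ℕ) : ZMod p))) := by
        rw [hqk, mul_sub, ← AddChar.map_add_eq_mul, ← AddChar.map_add_eq_mul, neg_add_cancel,
          AddChar.map_zero_eq_one]
        congr 2
        ring
      have e4 : (stdAddChar (-((n + 1 : ℕ) : ZMod p) ^ 2) : ℂ) = stdAddChar (-(n : ZMod p) ^ 2) *
          stdAddChar (-((2 * n + 1 : ℕ) : ZMod p)) := by
        rw [← AddChar.map_add_eq_mul]
        congr 1
        push_cast; ring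
      rw [e3, e4]
      ring
  rw [hsum, hprod m] at hS
  refine mul_left_cancel₀ ?_ hS
  rw [stdAddChar_apply]
  exact Circle.coe_ne_zero _

open ZMod in
lemma psi_sub (p : ℕ) [NeZero p] (n : ℕ) :
    (stdAddChar ((n : ℕ) : ZMod p) : ℂ) - stdAddChar (-((n : ℕ) : ZMod p))
      = 2 * I * (Real.sin (2 * Real.pi * n / p) : ℝ) := by
  have h1 := stdAddChar_coe (N := p) (n : ℤ)
  have h2 := stdAddChar_coe (N := p) (-(n : ℤ))
  push_cast at h1 h2
  rw [h1, h2, Complex.ofReal_sin, Complex.sin]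
  push_cast
  have e1 : 2 * (Real.pi : ℂ) * I * n / p = 2 * Real.pi * n / p * I := by ring
  have e2 : 2 * (Real.pi : ℂ) * I * -n / p = -(2 * Real.pi * n / p) * I := by ring
  rw [e1, e2]
  linear_combination (cexp (2 * Real.pi * n / p * I) - cexp (-(2 * Real.pi * n / p) * I)) * I_sq

lemma fac_pos (p : ℕ) [NeZero p] (n : ℕ) (hn : 0 < n) (h : 2 * n < p) :
    2 * I * (Real.sin (2 * Real.pi * n / p) : ℝ)
      = I * (‖2 * I * ((Real.sin (2 * Real.pi * n / p) : ℝ) : ℂ)‖ : ℝ) := by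
  have hp : (0 : ℝ) < p := by exact_mod_cast (by omega : 0 < p)
  have hn' : (0 : ℝ) < n := by exact_mod_cast hn
  have h' : (2 : ℝ) * n < p := by exact_mod_cast h
  have hs : 0 < Real.sin (2 * Real.pi * n / p) := by
    apply Real.sin_pos_of_pos_of_lt_pi
    · have := Real.pi_pos; positivity
    · rw [div_lt_iff₀ hp]; nlinarith [Real.pi_pos]
  simp only [norm_mul, Complex.norm_real, Real.norm_eq_abs, abs_of_pos hs, norm_I]
  push_cast
  simp
  ring

lemma fac_neg (p : ℕ) [NeZero p] (n : ℕ) (hn : p < 2 * n) (h : n < p) :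
    2 * I * (Real.sin (2 * Real.pi * n / p) : ℝ)
      = -I * (‖2 * I * ((Real.sin (2 * Real.pi * n / p) : ℝ) : ℂ)‖ : ℝ) := by
  have hp : (0 : ℝ) < p := by exact_mod_cast (by omega : 0 < p)
  have hn' : (p : ℝ) < 2 * n := by exact_mod_cast hn
  have h' : (n : ℝ) < p := by exact_mod_cast h
  have hs : Real.sin (2 * Real.pi * n / p) < 0 := by
    rw [← Real.sin_sub_two_pi]
    apply Real.sin_neg_of_neg_of_neg_pi_lt
    · rw [sub_neg, div_lt_iff₀ hp]; nlinarith [Real.pi_pos]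
    · rw [lt_sub_iff_add_lt, lt_div_iff₀ hp]; nlinarith [Real.pi_pos]
  simp only [norm_mul, Complex.norm_real, Real.norm_eq_abs, abs_of_neg hs, norm_I]
  push_cast
  simp
  ring

open ZMod in
lemma gauss_sign (p : ℕ) [Fact p.Prime] (hodd : Odd p) :
    ∑ x : ZMod p, (stdAddChar (x ^ 2) : ℂ) =
      (if p % 4 = 1 then 1 else I) * (‖∑ x : ZMod p, (stdAddChar (x ^ 2) : ℂ)‖ : ℝ) := by
  obtain ⟨m, hm⟩ := hodd
  rw [gauss_prod p m hm]
  simp only [psi_sub]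
  have split : ∀ a b : ℕ, m = a + b → (∀ k, k < a → 2 * (2 * k + 1) < p) →
      (∀ k, k < b → p < 2 * (2 * (a + k) + 1)) →
      ∏ k ∈ Finset.range m, (2 * I * ((Real.sin (2 * Real.pi * (2 * k + 1 : ℕ) / p) : ℝ) : ℂ)) =
      (I ^ a * (-I) ^ b) * (‖∏ k ∈ Finset.range m,
        (2 * I * ((Real.sin (2 * Real.pi * (2 * k + 1 : ℕ) / p) : ℝ) : ℂ))‖ : ℝ) := by
    intro a b hab h1 h2
    rw [hab, norm_prod, Finset.prod_range_add, Finset.prod_range_add]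
    rw [Finset.prod_congr rfl (fun k hk => fac_pos p (2 * k + 1) (by omega)
      (h1 k (Finset.mem_range.mp hk)))]
    rw [Finset.prod_congr rfl (fun k hk => fac_neg p (2 * (a + k) + 1)
      (h2 k (Finset.mem_range.mp hk)) (by have := Finset.mem_range.mp hk; omega))]
    rw [Finset.prod_mul_distrib, Finset.prod_mul_distrib]
    simp only [Finset.prod_const, Finset.card_range]
    push_cast
    ring
  split_ifs with h4
  · rw [split (m / 2) (m / 2) (by omega) (by intros; omega) (by intros; omega), ← mul_pow]
    simp
  · rw [split (m / 2 + 1) (m / 2) (by omega) (by intros; omega) (by intros; omega), pow_succ',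
      mul_assoc I, ← mul_pow]
    simp

open ZMod in
lemma gauss_quad (p : ℕ) [Fact p.Prime] (hodd : Odd p) (c : ZMod p) (hc : c ≠ 0) :
    ∑ x : ZMod p, (stdAddChar (c * x ^ 2) : ℂ) =
      gaussSum ((quadraticChar (ZMod p)).ringHomComp (Int.castRingHom ℂ))
        (stdAddChar.mulShift c) := by
  have hch : ringChar (ZMod p) ≠ 2 := by
    rw [ZMod.ringChar_zmod_n]; rintro rfl; exact absurd hodd (by decide)
  have h0 : ∑ a : ZMod p, (stdAddChar (c * a) : ℂ) = 0 := by
    have := AddChar.sum_mulShift c (isPrimitive_stdAddChar p)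
    simpa [hc, mul_comm] using this
  have h1 : ∑ x : ZMod p, (stdAddChar (c * x ^ 2) : ℂ)
      = ∑ a : ZMod p, ((quadraticChar (ZMod p) a : ℂ) + 1) * stdAddChar (c * a) := by
    rw [← Finset.sum_fiberwise Finset.univ (fun x : ZMod p => x ^ 2)]
    refine Finset.sum_congr rfl fun a _ => ?_
    rw [Finset.sum_congr rfl (g := fun _ => (stdAddChar (c * a) : ℂ))
      (fun x hx => by rw [(Finset.mem_filter.mp hx).2]), Finset.sum_const, nsmul_eq_mul]
    congr 1
    have := quadraticChar_card_sqrts hch a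
    have h5 : ((#{x : ZMod p | x ^ 2 = a} : ℕ) : ℤ) = quadraticChar (ZMod p) a + 1 := by
      rw [← this]; congr 2; ext; simp
    exact_mod_cast h5
  rw [h1]
  simp only [add_mul, one_mul, Finset.sum_add_distrib, h0, add_zero]
  rfl

open ZMod in
lemma gauss_one (p : ℕ) [Fact p.Prime] (hodd : Odd p) (c : ℤ) (hc : (c : ZMod p) ≠ 0) :
    ∑ x : ZMod p, (stdAddChar ((c : ZMod p) * x ^ 2) : ℂ) =
      (Real.sqrt p : ℝ) * (legendreSym p c : ℂ) * (if p % 4 = 1 then 1 else I) := by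
  have hch : ringChar (ZMod p) ≠ 2 := by
    rw [ZMod.ringChar_zmod_n]; rintro rfl; exact absurd hodd (by decide)
  set χ := (quadraticChar (ZMod p)).ringHomComp (Int.castRingHom ℂ) with hχ
  have hq : χ.IsQuadratic := (quadraticChar_isQuadratic _).comp _
  have hne : χ ≠ 1 := by
    rw [hχ, Ne, MulChar.ringHomComp_eq_one_iff (RingHom.injective_int _)]
    exact quadraticChar_ne_one hch
  have hone := gauss_quad p hodd 1 one_ne_zero
  simp only [one_mul, AddChar.mulShift_one] at hone
  have hsq := gaussSum_sq hne hq (isPrimitive_stdAddChar p)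
  have hnorm : ‖∑ x : ZMod p, (stdAddChar (x ^ 2) : ℂ)‖ = Real.sqrt p := by
    rw [hone]
    symm
    rw [Real.sqrt_eq_iff_mul_self_eq (by positivity) (by positivity), ← pow_two, ← norm_pow, hsq,
      norm_mul, ZMod.card, Complex.norm_natCast]
    have : χ (-1) = 1 ∨ χ (-1) = -1 := by
      rcases hq (-1) with h | h
      · exact absurd h ((isUnit_one.neg.map χ).ne_zero)
      · exact h
    rcases this with h | h <;> simp [h]
  have hs := gauss_sign p hodd
  rw [hnorm, hone] at hs
  rw [gauss_quad p hodd _ hc]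
  have := gaussSum_mulShift_eq χ stdAddChar (Units.mk0 _ hc)
  rw [Units.val_mk0] at this
  rw [this, hs, hq.inv]
  have h6 : χ (c : ZMod p) = (legendreSym p c : ℂ) := rfl
  rw [h6]; ring

lemma sum_range_mul_split (M N : ℕ) (f : ℕ → ℂ) :
    ∑ r ∈ Finset.range (M * N), f r
      = ∑ b ∈ Finset.range N, ∑ a ∈ Finset.range M, f (M * b + a) := by
  induction N with
  | zero => simp
  | succ N ih => rw [Nat.mul_succ, Finset.sum_range_add, ih, Finset.sum_range_succ]

lemma e_add (x y : ℝ) : e (x + y) = e x * e y := by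
  unfold e
  rw [← Complex.exp_add]; congr 1; push_cast; ring

lemma e_int (n : ℤ) : e n = 1 := by
  unfold e
  rw [Complex.exp_eq_one_iff]
  exact ⟨n, by push_cast; ring⟩

lemma e_div (p : ℕ) [NeZero p] (n : ℤ) : e ((n : ℝ) / p) = ZMod.stdAddChar (n : ZMod p) := by
  rw [ZMod.stdAddChar_coe]
  unfold e
  congr 1; push_cast; ring

lemma gauss_red (p : ℕ) [Fact p.Prime] (hodd : Odd p) (t : ℕ) (c : ℤ) (hc : (c : ZMod p) ≠ 0) :
    ∑ r ∈ Finset.range (p ^ (t + 2)), e ((c * (r : ℤ) ^ 2 : ℤ) / (p ^ (t + 2) : ℝ)) =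
      p * ∑ r ∈ Finset.range (p ^ t), e ((c * (r : ℤ) ^ 2 : ℤ) / (p ^ t : ℝ)) := by
  have hp0 : (p : ℝ) ≠ 0 := by exact_mod_cast (NeZero.ne p)
  have h2 : (2 : ZMod p) ≠ 0 := by
    obtain ⟨m, hm⟩ := hodd
    have hm0 : ((2 * m + 1 : ℕ) : ZMod p) = 0 := by rw [← hm]; simp
    push_cast at hm0
    intro h; rw [h] at hm0; simp at hm0
  have key : ∀ a b : ℕ, e ((c * ((p ^ (t + 1) * b + a : ℕ) : ℤ) ^ 2 : ℤ) / (p ^ (t + 2) : ℝ))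
      = e ((c * (a : ℤ) ^ 2 : ℤ) / (p ^ (t + 2) : ℝ))
        * ZMod.stdAddChar ((b : ZMod p) * (2 * (c : ZMod p) * (a : ZMod p))) := by
    intro a b
    have h3 := e_div p ((b : ℤ) * (2 * c * a))
    push_cast at h3
    rw [← h3, ← e_add, ← mul_one (e (_ + _)), ← e_int (c * p ^ t * b ^ 2), ← e_add]
    congr 1
    push_cast
    field_simp
    ring
  have hsum : ∀ a : ℕ, ∑ b ∈ Finset.range p,
      (ZMod.stdAddChar ((b : ZMod p) * (2 * (c : ZMod p) * (a : ZMod p))) : ℂ) = if p ∣ a then (p : ℂ) else 0 := by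
    intro a
    rw [sum_range_zmod p (fun x => (ZMod.stdAddChar (x * (2 * (c : ZMod p) * (a : ZMod p))) : ℂ)),
      AddChar.sum_mulShift _ (ZMod.isPrimitive_stdAddChar p), ZMod.card]
    simp [h2, hc, ZMod.natCast_eq_zero_iff]
  rw [show p ^ (t + 2) = p ^ (t + 1) * p by ring, sum_range_mul_split, Finset.sum_comm]
  simp only [key, ← Finset.mul_sum, hsum]
  rw [show p ^ (t + 1) = p * p ^ t by ring, sum_range_mul_split, Finset.mul_sum]
  refine Finset.sum_congr rfl fun b _ => ?_
  rw [Finset.sum_eq_single 0]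
  · rw [if_pos (by simp), mul_comm]
    congr 2
    push_cast
    field_simp
    ring
  · intro i hi h0
    rw [if_neg, mul_zero]
    rw [Nat.dvd_add_right (dvd_mul_right _ _)]
    intro h
    have := Nat.le_of_dvd (by omega) h
    have := Finset.mem_range.mp hi
    omega
  · intro h
    exact absurd (Finset.mem_range.mpr (NeZero.pos p)) h

lemma gauss_iter (p : ℕ) [Fact p.Prime] (hodd : Odd p) (s k : ℕ) (c : ℤ) (hc : (c : ZMod p) ≠ 0) :
    ∑ r ∈ Finset.range (p ^ (2 * k + s)), e ((c * (r : ℤ) ^ 2 : ℤ) / (p ^ (2 * k + s) : ℝ)) =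
      p ^ k * ∑ r ∈ Finset.range (p ^ s), e ((c * (r : ℤ) ^ 2 : ℤ) / (p ^ s : ℝ)) := by
  induction k with
  | zero => simp
  | succ k ih =>
    rw [show 2 * (k + 1) + s = 2 * k + s + 2 by ring, gauss_red p hodd _ c hc, ih]
    ring

theorem stmt0 (p : ℕ) [Fact p.Prime] (hodd : Odd p) (t : ℕ) (ht : 1 ≤ t)
    (c : ℤ) (hc : IsCoprime (p : ℤ) c) :
    ∑ r ∈ Finset.range (p ^ t), e ((c * (r : ℤ) ^ 2 : ℤ) / (p ^ t : ℝ)) =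
      if Even t then (((p : ℝ) ^ ((t : ℝ) / 2) : ℝ) : ℂ)
      else (((p : ℝ) ^ ((t : ℝ) / 2) : ℝ) : ℂ) * (legendreSym p c : ℂ) *
        (if p % 4 = 1 then 1 else Complex.I) := by
  have hp : p.Prime := Fact.out
  have hp0 : (0 : ℝ) < p := by exact_mod_cast hp.pos
  have hc' : (c : ZMod p) ≠ 0 := by
    rw [Ne, ZMod.intCast_zmod_eq_zero_iff_dvd]
    intro h
    have h1 := hc.isUnit_of_dvd' dvd_rfl h
    exact (Nat.prime_iff_prime_int.mp hp).not_isUnit h1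
  by_cases hev : Even t
  · rw [if_pos hev]
    obtain ⟨k, hk⟩ := hev
    have := gauss_iter p hodd 0 k c hc'
    rw [show t = 2 * k + 0 by omega, this]
    rw [show (((2 * k + 0 : ℕ) : ℝ) / 2) = (k : ℝ) by push_cast; ring, Real.rpow_natCast]
    simp [e]
  · rw [if_neg hev]
    rw [Nat.not_even_iff_odd] at hev
    obtain ⟨k, hk⟩ := hev
    have h1 := gauss_iter p hodd 1 k c hc'
    have h2 : ∑ r ∈ Finset.range (p ^ 1), e ((c * (r : ℤ) ^ 2 : ℤ) / (p ^ 1 : ℝ))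
        = ∑ x : ZMod p, (ZMod.stdAddChar ((c : ZMod p) * x ^ 2) : ℂ) := by
      rw [← sum_range_zmod p (fun x => (ZMod.stdAddChar ((c : ZMod p) * x ^ 2) : ℂ)), pow_one,
        pow_one]
      refine Finset.sum_congr rfl fun r _ => ?_
      rw [e_div]
      push_cast
      rfl
    rw [hk, h1, h2, gauss_one p hodd c hc',
      show (((2 * k + 1 : ℕ) : ℝ) / 2) = (k : ℝ) + 1 / 2 by push_cast; ring,
      Real.rpow_add hp0, Real.rpow_natCast, ← Real.sqrt_eq_rpow]
    push_cast
    ring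
end

section
/- Let F be a quadratic polynomial in ℓ variables with first discriminant Δ_F ≠ 0 and first Q-root R_F. Let p be a prime with gcd(p, 2Δ_F R_F) = 1. Then the exponential sum S_F(p^t) = p^{-t} ∑_{a ∈ (ℤ/p^tℤ)^*} ∑_{h ∈ (ℤ/p^tℤ)^ℓ} e(aF(h)/p^t) satisfies: S_F(p) = p^{(ℓ-1)/2} (((-1)^{(ℓ+1)/2} R_F)/p) if ℓ is odd, S_F(p) = −p^{(ℓ-2)/2} (((-1)^{ℓ/2} Δ_F)/p) if ℓ is even, and S_F(p^t) = 0 for all t ≥ 2. -/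
open Complex Finset Matrix

/-- The normalized exponential sum `S_F(q)` for the quadratic polynomial
`F(x) = xᵀQx + bᵀx + c`. -/
noncomputable def SF (ℓ : ℕ) (Q : Matrix (Fin ℓ) (Fin ℓ) ℤ) (b : Fin ℓ → ℤ) (c : ℤ)
    (q : ℕ) [NeZero q] : ℂ :=
  (q : ℂ)⁻¹ * ∑ a : (ZMod q)ˣ, ∑ h : Fin ℓ → ZMod q,
    e ((((a : ZMod q).val : ℤ) *
        ((fun i => ((h i).val : ℤ)) ⬝ᵥ Q.mulVec (fun i => ((h i).val : ℤ)) +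
          b ⬝ᵥ (fun i => ((h i).val : ℤ)) + c) : ℤ) / (q : ℝ))


/-- The quadratic polynomial over a commutative ring. -/
def qf {R : Type*} [CommRing R] {ℓ : ℕ} (Q : Matrix (Fin ℓ) (Fin ℓ) R) (b : Fin ℓ → R) (c : R)
    (h : Fin ℓ → R) : R := h ⬝ᵥ Q.mulVec h + b ⬝ᵥ h + c

lemma sum_pi_char {R : Type*} [CommRing R] [Fintype R] {ℓ : ℕ}
    (ψ : AddChar R ℂ) (f : Fin ℓ → R → R) :
    ∑ h : Fin ℓ → R, ψ (∑ i, f i (h i)) = ∏ i, ∑ x, ψ (f i x) := by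
  classical
  rw [Finset.prod_univ_sum]
  simp only [Fintype.piFinset_univ]
  refine Finset.sum_congr rfl fun h _ => ?_
  have := map_prod ψ.toMonoidHom (fun i => Multiplicative.ofAdd (f i (h i))) Finset.univ
  rw [← ofAdd_sum] at this
  exact this

lemma SF_eq (ℓ : ℕ) (Q : Matrix (Fin ℓ) (Fin ℓ) ℤ) (b : Fin ℓ → ℤ) (c : ℤ)
    (q : ℕ) [NeZero q] :
    SF ℓ Q b c q = (q : ℂ)⁻¹ * ∑ a : (ZMod q)ˣ, ∑ h : Fin ℓ → ZMod q,
      ZMod.stdAddChar ((a : ZMod q) * qf (Q.map (Int.castRingHom (ZMod q)))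
        (fun i => (b i : ZMod q)) (c : ZMod q) h) := by
  unfold SF
  congr 1
  refine Finset.sum_congr rfl fun a _ => Finset.sum_congr rfl fun h _ => ?_
  have : ((a : ZMod q) * qf (Q.map (Int.castRingHom (ZMod q)))
        (fun i => (b i : ZMod q)) (c : ZMod q) h) =
      (((((a : ZMod q).val : ℤ) *
        ((fun i => ((h i).val : ℤ)) ⬝ᵥ Q.mulVec (fun i => ((h i).val : ℤ)) +
          b ⬝ᵥ (fun i => ((h i).val : ℤ)) + c) : ℤ)) : ZMod q) := by
    simp [qf, dotProduct, Matrix.mulVec]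
  rw [this, ZMod.stdAddChar_coe, e]
  congr 1
  push_cast
  ring

section alg
variable {R : Type*} [CommRing R] {ℓ : ℕ} (Q : Matrix (Fin ℓ) (Fin ℓ) R) (b : Fin ℓ → R) (c : R)

lemma dot_swap (h k : Fin ℓ → R) : h ⬝ᵥ Q.mulVec k = k ⬝ᵥ Qᵀ.mulVec h := by
  rw [Matrix.dotProduct_mulVec, ← Matrix.mulVec_transpose, dotProduct_comm]

lemma qf_shift (n : R) (h k : Fin ℓ → R) :
    qf Q b c (h + n • k) = qf Q b c h + n * (((Qᵀ + Q).mulVec h + b) ⬝ᵥ k)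
      + n ^ 2 * (k ⬝ᵥ Q.mulVec k) := by
  have h1 := dot_swap Q h k
  simp only [qf, Matrix.mulVec_add, Matrix.mulVec_smul, Matrix.add_mulVec, add_dotProduct,
    dotProduct_add, smul_dotProduct, dotProduct_smul, smul_eq_mul, h1,
    dotProduct_comm _ k]
  ring

lemma qf_two (h : Fin ℓ → R) : 2 * (h ⬝ᵥ Q.mulVec h) = h ⬝ᵥ (Qᵀ + Q).mulVec h := by
  rw [Matrix.add_mulVec, dotProduct_add, ← dot_swap Q h h]
  ring

lemma qf_root (h : Fin ℓ → R) :
    2 * (Qᵀ + Q).det * qf Q b c h =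
      (Qᵀ + Q).det * (h ⬝ᵥ ((Qᵀ + Q).mulVec h + b)) +
      b ⬝ᵥ (Qᵀ + Q).adjugate.mulVec ((Qᵀ + Q).mulVec h + b) +
      (2 * c * (Qᵀ + Q).det - b ⬝ᵥ (Qᵀ + Q).adjugate.mulVec b) := by
  have h1 := qf_two Q h
  have h2 : (Qᵀ + Q).adjugate.mulVec ((Qᵀ + Q).mulVec h) = (Qᵀ + Q).det • h := by
    rw [Matrix.mulVec_mulVec, Matrix.adjugate_mul, Matrix.smul_mulVec, Matrix.one_mulVec]
  rw [Matrix.mulVec_add, h2]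
  simp only [qf, dotProduct_add, dotProduct_smul, smul_eq_mul, ← h1, dotProduct_comm h b]
  ring

end alg

lemma unit_sum_zero (p t : ℕ) [Fact p.Prime] (ht : 2 ≤ t) (u : ZMod (p ^ t)) (hu : IsUnit u) :
    ∑ a : (ZMod (p ^ t))ˣ, ZMod.stdAddChar ((a : ZMod (p ^ t)) * u) = 0 := by
  classical
  obtain ⟨u, rfl⟩ := hu
  rw [Fintype.sum_equiv (Equiv.mulRight u) _
    (fun a : (ZMod (p ^ t))ˣ => ZMod.stdAddChar (a : ZMod (p ^ t))) (by intro a; simp)]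
  have h1 : ∑ a : (ZMod (p ^ t))ˣ, ZMod.stdAddChar (a : ZMod (p ^ t)) =
      ∑ x : ZMod (p ^ t), if IsUnit x then ZMod.stdAddChar x else 0 := by
    rw [← Finset.sum_filter]
    refine Finset.sum_bij (fun a _ => (a : ZMod (p ^ t))) ?_ ?_ ?_ ?_
    · intro a _; simp
    · intro a _ b _ h; exact Units.ext h
    · intro x hx
      obtain ⟨a, rfl⟩ := (Finset.mem_filter.1 hx).2
      exact ⟨a, Finset.mem_univ _, rfl⟩
    · intro a _; rfl
  rw [h1]
  set n : ZMod (p ^ t) := ((p ^ (t - 1) : ℕ) : ZMod (p ^ t)) with hn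
  have hn0 : n ≠ 0 := by
    rw [hn, Ne, ZMod.natCast_eq_zero_iff]
    intro h
    have := (Nat.pow_dvd_pow_iff_le_right (Fact.out : p.Prime).one_lt).1 h
    omega
  have hnn : IsNilpotent n := by
    refine ⟨2, ?_⟩
    rw [hn, ← Nat.cast_pow, ZMod.natCast_eq_zero_iff, ← pow_mul]
    exact pow_dvd_pow _ (by omega)
  have hiff : ∀ x : ZMod (p ^ t), IsUnit (x + n) ↔ IsUnit x := by
    intro x
    constructor
    · intro h
      have := hnn.neg.isUnit_add_left_of_commute h (Commute.all _ _)
      simpa using this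
    · intro h
      exact hnn.isUnit_add_left_of_commute h (Commute.all _ _)
  have h2 : (∑ x : ZMod (p ^ t), if IsUnit x then (ZMod.stdAddChar x : ℂ) else 0) =
      ZMod.stdAddChar n * ∑ x : ZMod (p ^ t), if IsUnit x then (ZMod.stdAddChar x : ℂ) else 0 := by
    conv_lhs => rw [← Equiv.sum_comp (Equiv.addRight n)]
    rw [Finset.mul_sum]
    refine Finset.sum_congr rfl fun x _ => ?_
    simp only [Equiv.coe_addRight, hiff, AddChar.map_add_eq_mul]
    split_ifs <;> ring
  have h3 : (ZMod.stdAddChar n : ℂ) ≠ 1 := by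
    intro h
    exact hn0 (ZMod.injective_stdAddChar (by rw [h, AddChar.map_zero_eq_one]))
  have h4 : (1 - (ZMod.stdAddChar n : ℂ)) *
      ∑ x : ZMod (p ^ t), (if IsUnit x then (ZMod.stdAddChar x : ℂ) else 0) = 0 := by
    linear_combination h2
  rcases mul_eq_zero.1 h4 with h | h
  · exact absurd (sub_eq_zero.1 h).symm h3
  · exact h

lemma hsum_char (q : ℕ) [NeZero q] {ℓ : ℕ} (v : Fin ℓ → ZMod q) :
    ∑ k : Fin ℓ → ZMod q, (ZMod.stdAddChar (v ⬝ᵥ k) : ℂ) =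
      if v = 0 then (q : ℂ) ^ ℓ else 0 := by
  classical
  have := sum_pi_char (ZMod.stdAddChar : AddChar (ZMod q) ℂ) (fun i x => v i * x)
  unfold dotProduct
  rw [this]
  split_ifs with h
  · subst h
    simp [ZMod.card]
  · obtain ⟨i, hi⟩ := Function.ne_iff.1 h
    refine Finset.prod_eq_zero (Finset.mem_univ i) ?_
    have := AddChar.sum_mulShift (v i) (ZMod.isPrimitive_stdAddChar q)
    simp only [mul_comm] at this ⊢
    rw [this, if_neg (by simpa using hi)]; simp

lemma high_power (p t : ℕ) [Fact p.Prime] (ht : 2 ≤ t) {ℓ : ℕ}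
    (Q : Matrix (Fin ℓ) (Fin ℓ) (ZMod (p ^ t))) (b : Fin ℓ → ZMod (p ^ t)) (c : ZMod (p ^ t))
    (hR : IsUnit (2 * c * (Qᵀ + Q).det - b ⬝ᵥ (Qᵀ + Q).adjugate.mulVec b)) :
    ∑ a : (ZMod (p ^ t))ˣ, ∑ h : Fin ℓ → ZMod (p ^ t),
      (ZMod.stdAddChar ((a : ZMod (p ^ t)) * qf Q b c h) : ℂ) = 0 := by
  classical
  set n : ZMod (p ^ t) := ((p ^ (t - 1) : ℕ) : ZMod (p ^ t)) with hn
  have hn0 : n ≠ 0 := by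
    rw [hn, Ne, ZMod.natCast_eq_zero_iff]
    intro h
    have := (Nat.pow_dvd_pow_iff_le_right (Fact.out : p.Prime).one_lt).1 h
    omega
  have hn2 : n ^ 2 = 0 := by
    rw [hn, ← Nat.cast_pow, ZMod.natCast_eq_zero_iff, ← pow_mul]
    exact pow_dvd_pow _ (by omega)
  have hnp : n * (p : ZMod (p ^ t)) = 0 := by
    rw [hn, ← Nat.cast_mul, ZMod.natCast_eq_zero_iff, ← pow_succ]
    exact pow_dvd_pow _ (by omega)
  have key : ∀ a : (ZMod (p ^ t))ˣ, ∑ h : Fin ℓ → ZMod (p ^ t),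
      (ZMod.stdAddChar ((a : ZMod (p ^ t)) * qf Q b c h) : ℂ) =
      ∑ h : Fin ℓ → ZMod (p ^ t), if n • ((Qᵀ + Q).mulVec h + b) = 0 then
      (ZMod.stdAddChar ((a : ZMod (p ^ t)) * qf Q b c h) : ℂ) else 0 := by
    intro a
    have hq0 : ((p ^ t : ℕ) : ℂ) ^ ℓ ≠ 0 :=
      pow_ne_zero _ (Nat.cast_ne_zero.2 (NeZero.ne (p ^ t)))
    apply mul_left_cancel₀ hq0
    have h1 : ((p ^ t : ℕ) : ℂ) ^ ℓ * ∑ h : Fin ℓ → ZMod (p ^ t),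
        (ZMod.stdAddChar ((a : ZMod (p ^ t)) * qf Q b c h) : ℂ) =
        ∑ k : Fin ℓ → ZMod (p ^ t), ∑ h : Fin ℓ → ZMod (p ^ t),
        (ZMod.stdAddChar ((a : ZMod (p ^ t)) * qf Q b c (h + n • k)) : ℂ) := by
      have : ∀ k : Fin ℓ → ZMod (p ^ t), ∑ h : Fin ℓ → ZMod (p ^ t),
        (ZMod.stdAddChar ((a : ZMod (p ^ t)) * qf Q b c (h + n • k)) : ℂ) =
        ∑ h : Fin ℓ → ZMod (p ^ t),
        (ZMod.stdAddChar ((a : ZMod (p ^ t)) * qf Q b c h) : ℂ) := fun k =>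
          Equiv.sum_comp (Equiv.addRight (n • k)) (fun h =>
            (ZMod.stdAddChar ((a : ZMod (p ^ t)) * qf Q b c h) : ℂ))
      simp only [this]
      simp [ZMod.card]
    rw [h1, Finset.sum_comm, Finset.mul_sum]
    refine Finset.sum_congr rfl fun h _ => ?_
    have h2 : ∀ k : Fin ℓ → ZMod (p ^ t),
        (ZMod.stdAddChar ((a : ZMod (p ^ t)) * qf Q b c (h + n • k)) : ℂ) =
        ZMod.stdAddChar ((a : ZMod (p ^ t)) * qf Q b c h) *
        ZMod.stdAddChar (((a : ZMod (p ^ t)) • n • ((Qᵀ + Q).mulVec h + b)) ⬝ᵥ k) := by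
      intro k
      rw [← AddChar.map_add_eq_mul, qf_shift, hn2]
      congr 1
      simp only [smul_dotProduct, smul_eq_mul]
      ring
    simp only [h2]
    rw [← Finset.mul_sum, hsum_char]
    have h3 : ((a : ZMod (p ^ t)) • n • ((Qᵀ + Q).mulVec h + b) = 0) ↔
        (n • ((Qᵀ + Q).mulVec h + b) = 0) := by
      constructor
      · intro h
        have := congrArg (fun v => ((a⁻¹ : (ZMod (p ^ t))ˣ) : ZMod (p ^ t)) • v) h
        simpa only [smul_smul, ← mul_assoc, Units.inv_mul, one_mul, smul_zero] using this
      · intro h; rw [h, smul_zero]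
    simp only [h3]
    split_ifs <;> ring
  simp only [key]
  rw [Finset.sum_comm]
  refine Finset.sum_eq_zero fun h _ => ?_
  split_ifs with hh
  swap
  · simp
  apply unit_sum_zero p t ht
  by_contra hF
  have hnF : n * qf Q b c h = 0 := by
    have h1 : ¬ (qf Q b c h).val.Coprime (p ^ t) := by
      rw [← ZMod.isUnit_iff_coprime, ZMod.natCast_zmod_val]
      exact hF
    have h2 : p ∣ (qf Q b c h).val := by
      by_contra h3
      exact h1 (Nat.Coprime.pow_right _
        (((Fact.out : p.Prime).coprime_iff_not_dvd.2 h3).symm))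
    obtain ⟨m, hm⟩ := h2
    rw [← ZMod.natCast_zmod_val (qf Q b c h), hm, Nat.cast_mul, ← mul_assoc, hnp, zero_mul]
  have h4 := qf_root Q b c h
  have h5 : n * (h ⬝ᵥ ((Qᵀ + Q).mulVec h + b)) = 0 := by
    rw [← smul_eq_mul, ← dotProduct_smul, hh, dotProduct_zero]
  have h6 : n * (b ⬝ᵥ (Qᵀ + Q).adjugate.mulVec ((Qᵀ + Q).mulVec h + b)) = 0 := by
    rw [← smul_eq_mul, ← dotProduct_smul, ← Matrix.mulVec_smul, hh, Matrix.mulVec_zero,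
      dotProduct_zero]
  have h7 : n * (2 * c * (Qᵀ + Q).det - b ⬝ᵥ (Qᵀ + Q).adjugate.mulVec b) = 0 := by
    linear_combination (-n) * h4 - (Qᵀ + Q).det * h5 - h6 + 2 * (Qᵀ + Q).det * hnF
  exact hn0 ((hR.mul_left_eq_zero).1 h7)


lemma diagonalize {K : Type*} [Field K] (h2 : (2 : K) ≠ 0) {ℓ : ℕ}
    (A : Matrix (Fin ℓ) (Fin ℓ) K) (hA : Aᵀ = A) :
    ∃ (P : Matrix (Fin ℓ) (Fin ℓ) K) (d : Fin ℓ → K), IsUnit P.det ∧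
      Pᵀ * A * P = Matrix.diagonal d := by
  classical
  have : Invertible (2 : K) := invertibleOfNonzero h2
  have hs : LinearMap.IsSymm (Matrix.toBilin' A) := by
    constructor
    intro x y
    simp only [Matrix.toBilin'_apply', RingHom.id_apply]
    rw [dot_swap, hA]
  obtain ⟨v, hv⟩ := LinearMap.BilinForm.exists_orthogonal_basis hs
  have hfr : Module.finrank K (Fin ℓ → K) = ℓ := by simp
  let w : Module.Basis (Fin ℓ) K (Fin ℓ → K) := v.reindex (finCongr hfr)
  have hw : ∀ i j, i ≠ j → (Matrix.toBilin' A) (w i) (w j) = 0 := by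
    intro i j hij
    simp only [w, Module.Basis.reindex_apply]
    exact hv (by simpa using hij)
  have key := LinearMap.BilinForm.toMatrix_mul_basis_toMatrix (Pi.basisFun K (Fin ℓ)) w
    (Matrix.toBilin' A)
  refine ⟨(Pi.basisFun K (Fin ℓ)).toMatrix w, fun i => (Matrix.toBilin' A) (w i) (w i), ?_, ?_⟩
  · rw [← Matrix.isUnit_iff_isUnit_det]
    exact IsUnit.of_mul_eq_one _ (Module.Basis.toMatrix_mul_toMatrix_flip (Pi.basisFun K (Fin ℓ)) w)
  · rw [LinearMap.BilinForm.toMatrix_basisFun, LinearMap.BilinForm.toMatrix'_toBilin'] at key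
    rw [key]
    ext i j
    rw [LinearMap.BilinForm.toMatrix_apply, Matrix.diagonal_apply]
    split_ifs with h
    · rw [h]
    · exact hw i j h

/-- The complex-valued quadratic character. -/
noncomputable def qc (p : ℕ) [Fact p.Prime] : MulChar (ZMod p) ℂ :=
  (quadraticChar (ZMod p)).ringHomComp (Int.castRingHom ℂ)

lemma qc_apply (p : ℕ) [Fact p.Prime] (x : ZMod p) :
    qc p x = ((quadraticChar (ZMod p) x : ℤ) : ℂ) := rfl

lemma qc_legendre (p : ℕ) [Fact p.Prime] (x : ℤ) :
    ((legendreSym p x : ℤ) : ℂ) = qc p (x : ZMod p) := rfl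

lemma qc_sq (p : ℕ) [Fact p.Prime] {x : ZMod p} (hx : x ≠ 0) : qc p x ^ 2 = 1 := by
  rw [qc_apply]
  exact_mod_cast quadraticChar_sq_one hx

lemma qc_ne_one (p : ℕ) [Fact p.Prime] (hp : p ≠ 2) : qc p ≠ 1 := by
  have h : ringChar (ZMod p) ≠ 2 := by rwa [ZMod.ringChar_zmod_n]
  obtain ⟨a, ha⟩ := quadraticChar_exists_neg_one h
  intro h1
  have h2 : a ≠ 0 := by rintro rfl; simp at ha
  have := congrArg (fun χ : MulChar (ZMod p) ℂ => χ a) h1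
  simp only [qc_apply, ha, MulChar.one_apply h2.isUnit] at this
  norm_num at this

/-- The quadratic Gauss sum. -/
noncomputable def gs (p : ℕ) [Fact p.Prime] : ℂ := gaussSum (qc p) ZMod.stdAddChar

lemma gs_sq (p : ℕ) [Fact p.Prime] (hp : p ≠ 2) : gs p ^ 2 = qc p (-1) * p := by
  have hq : (qc p).IsQuadratic := (quadraticChar_isQuadratic (ZMod p)).comp _
  rw [gs, gaussSum_sq (qc_ne_one p hp) hq (ZMod.isPrimitive_stdAddChar p), ZMod.card]

lemma gs_shift (p : ℕ) [Fact p.Prime] {r : ZMod p} (hr : r ≠ 0) :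
    ∑ x : ZMod p, qc p x * ZMod.stdAddChar (x * r) = qc p r * gs p := by
  have h := gaussSum_mulShift (qc p) ZMod.stdAddChar (Units.mk0 r hr)
  rw [Units.val_mk0] at h
  rw [gs, ← h, ← mul_assoc, ← pow_two, qc_sq p hr, one_mul, gaussSum]
  refine Finset.sum_congr rfl fun x _ => ?_
  rw [AddChar.mulShift_apply, mul_comm r x]

lemma gauss_sq_sum (p : ℕ) [Fact p.Prime] (hp : p ≠ 2) {r : ZMod p} (hr : r ≠ 0) :
    ∑ x : ZMod p, (ZMod.stdAddChar (r * x ^ 2) : ℂ) = qc p r * gs p := by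
  classical
  have h : ringChar (ZMod p) ≠ 2 := by rwa [ZMod.ringChar_zmod_n]
  have h1 : ∑ x : ZMod p, (ZMod.stdAddChar (r * x ^ 2) : ℂ) =
      ∑ y : ZMod p, ∑ x : ZMod p with x ^ 2 = y, (ZMod.stdAddChar (r * x ^ 2) : ℂ) := by
    rw [Finset.sum_fiberwise]
  have h2 : ∀ y : ZMod p, ∑ x : ZMod p with x ^ 2 = y, (ZMod.stdAddChar (r * x ^ 2) : ℂ) =
      qc p y * ZMod.stdAddChar (y * r) + ZMod.stdAddChar (y * r) := by
    intro y
    rw [Finset.sum_congr rfl (g := fun _ => (ZMod.stdAddChar (y * r) : ℂ))]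
    · rw [Finset.sum_const, nsmul_eq_mul]
      have h3 := quadraticChar_card_sqrts h y
      have h4 : ({x : ZMod p | x ^ 2 = y}.toFinset) = Finset.univ.filter (fun x => x ^ 2 = y) := by
        ext x; simp
      rw [h4] at h3
      have h5 : ((Finset.univ.filter (fun x : ZMod p => x ^ 2 = y)).card : ℂ) = qc p y + 1 := by
        rw [qc_apply]; exact_mod_cast h3
      rw [h5]; ring
    · intro x hx
      rw [(Finset.mem_filter.1 hx).2, mul_comm]
  rw [h1, Finset.sum_congr rfl fun y _ => h2 y, Finset.sum_add_distrib, gs_shift p hr,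
    AddChar.sum_mulShift r (ZMod.isPrimitive_stdAddChar p), if_neg hr]
  simp

lemma form_sum (p : ℕ) [Fact p.Prime] (hp : p ≠ 2) {ℓ : ℕ}
    (Q : Matrix (Fin ℓ) (Fin ℓ) (ZMod p)) (hΔ : (Qᵀ + Q).det ≠ 0) {i2 : ZMod p} (hi : 2 * i2 = 1)
    {a : ZMod p} (ha : a ≠ 0) :
    ∑ k : Fin ℓ → ZMod p, (ZMod.stdAddChar (a * (k ⬝ᵥ Q.mulVec k)) : ℂ) =
      qc p (a * i2) ^ ℓ * qc p (Qᵀ + Q).det * gs p ^ ℓ := by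
  classical
  have h2 : (2 : ZMod p) ≠ 0 := left_ne_zero_of_mul_eq_one hi
  have hi0 : i2 ≠ 0 := right_ne_zero_of_mul_eq_one hi
  obtain ⟨P, d, hP, hd⟩ := diagonalize h2 (Qᵀ + Q) (by
    rw [Matrix.transpose_add, Matrix.transpose_transpose, add_comm])
  have hdet : P.det ^ 2 * (Qᵀ + Q).det = ∏ i, d i := by
    have := congrArg Matrix.det hd
    rw [Matrix.det_mul, Matrix.det_mul, Matrix.det_transpose, Matrix.det_diagonal] at this
    rw [← this]; ring
  have hd0 : ∀ i, d i ≠ 0 := by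
    have : ∏ i, d i ≠ 0 := by
      rw [← hdet]; exact mul_ne_zero (pow_ne_zero _ hP.ne_zero) hΔ
    intro i
    exact Finset.prod_ne_zero_iff.1 this i (Finset.mem_univ i)
  have hPu : IsUnit P := (Matrix.isUnit_iff_isUnit_det P).2 hP
  have hbij : Function.Bijective P.mulVec := ⟨Matrix.mulVec_injective_iff_isUnit.2 hPu,
    Matrix.mulVec_surjective_iff_isUnit.2 hPu⟩
  have hval : ∀ y : Fin ℓ → ZMod p, a * (P.mulVec y ⬝ᵥ Q.mulVec (P.mulVec y)) =
      ∑ i, (a * i2 * d i) * y i ^ 2 := by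
    intro y
    have h3 := qf_two Q (P.mulVec y)
    have h4 : P.mulVec y ⬝ᵥ (Qᵀ + Q).mulVec (P.mulVec y) = ∑ i, d i * y i ^ 2 := by
      rw [dotProduct_comm, dot_swap P, Matrix.mulVec_mulVec, Matrix.mulVec_mulVec,
        hd]
      simp only [dotProduct, Matrix.mulVec_diagonal]
      exact Finset.sum_congr rfl fun i _ => by ring
    rw [h4] at h3
    simp only [mul_assoc]
    rw [← Finset.mul_sum, ← Finset.mul_sum, ← h3]
    linear_combination (-a * (P.mulVec y ⬝ᵥ Q.mulVec (P.mulVec y))) * hi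
  rw [← hbij.sum_comp]
  simp only [hval]
  rw [sum_pi_char ZMod.stdAddChar (fun i x => (a * i2 * d i) * x ^ 2)]
  rw [Finset.prod_congr rfl fun i _ => gauss_sq_sum p hp
    (mul_ne_zero (mul_ne_zero ha hi0) (hd0 i))]
  rw [Finset.prod_mul_distrib]
  simp only [map_mul (qc p) _ (d _)]
  rw [Finset.prod_mul_distrib, ← map_prod (qc p) d, ← hdet, map_mul (qc p) _ (Qᵀ + Q).det, map_pow,
    qc_sq p hP.ne_zero]
  simp

lemma total_sum (p : ℕ) [Fact p.Prime] (hp : p ≠ 2) {ℓ : ℕ}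
    (Q : Matrix (Fin ℓ) (Fin ℓ) (ZMod p)) (b : Fin ℓ → ZMod p) (c : ZMod p)
    (hΔ : (Qᵀ + Q).det ≠ 0) {i2 : ZMod p} (hi : 2 * i2 = 1) :
    ∃ ρ : ZMod p, 2 * (Qᵀ + Q).det * ρ =
        2 * c * (Qᵀ + Q).det - b ⬝ᵥ (Qᵀ + Q).adjugate.mulVec b ∧
      ∀ a : ZMod p, a ≠ 0 → ∑ h : Fin ℓ → ZMod p, (ZMod.stdAddChar (a * qf Q b c h) : ℂ) =
        ZMod.stdAddChar (a * ρ) * (qc p (a * i2) ^ ℓ * qc p (Qᵀ + Q).det * gs p ^ ℓ) := by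
  set h0 : Fin ℓ → ZMod p := -((Qᵀ + Q)⁻¹.mulVec b) with hh0
  have hz : (Qᵀ + Q).mulVec h0 + b = 0 := by
    rw [hh0, Matrix.mulVec_neg, Matrix.mulVec_mulVec, Matrix.mul_nonsing_inv _ hΔ.isUnit,
      Matrix.one_mulVec, neg_add_cancel]
  refine ⟨qf Q b c h0, ?_, ?_⟩
  · rw [qf_root, hz, dotProduct_zero, Matrix.mulVec_zero, dotProduct_zero]; ring
  · intro a ha
    rw [← form_sum p hp Q hΔ hi ha, ← Equiv.sum_comp (Equiv.addLeft h0), Finset.mul_sum]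
    refine Finset.sum_congr rfl fun k _ => ?_
    have := qf_shift Q b c 1 h0 k
    rw [hz, one_smul, zero_dotProduct] at this
    rw [Equiv.coe_addLeft, this, ← AddChar.map_add_eq_mul]
    congr 1; ring

lemma sum_units_field (p : ℕ) [Fact p.Prime] (f : ZMod p → ℂ) :
    ∑ a : (ZMod p)ˣ, f a = ∑ a : ZMod p, f a - f 0 := by
  classical
  rw [← Finset.sum_erase_eq_sub (Finset.mem_univ 0)]
  refine Finset.sum_bij (fun a _ => (a : ZMod p)) ?_ ?_ ?_ ?_
  · intro a _; simp
  · intro a _ b _ h; exact Units.ext h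
  · intro x hx
    exact ⟨Units.mk0 x (Finset.mem_erase.1 hx).1, Finset.mem_univ _, rfl⟩
  · intro a _; rfl


lemma cast_det {R : Type*} [CommRing R] {ℓ : ℕ} (Q : Matrix (Fin ℓ) (Fin ℓ) ℤ) :
    (((Qᵀ + Q).det : ℤ) : R) =
      ((Q.map (Int.castRingHom R))ᵀ + Q.map (Int.castRingHom R)).det := by
  have := RingHom.map_det (Int.castRingHom R) (Qᵀ + Q)
  rw [eq_intCast] at this
  rw [this]
  congr 1
  ext i j
  simp

lemma cast_root {R : Type*} [CommRing R] {ℓ : ℕ} (Q : Matrix (Fin ℓ) (Fin ℓ) ℤ)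
    (b : Fin ℓ → ℤ) (c : ℤ) :
    ((2 * c * (Qᵀ + Q).det - b ⬝ᵥ (Qᵀ + Q).adjugate.mulVec b : ℤ) : R) =
      2 * (c : R) * ((Q.map (Int.castRingHom R))ᵀ + Q.map (Int.castRingHom R)).det -
      (fun i => (b i : R)) ⬝ᵥ ((Q.map (Int.castRingHom R))ᵀ +
        Q.map (Int.castRingHom R)).adjugate.mulVec (fun i => (b i : R)) := by
  rw [← cast_det]
  have h1 : ((Q.map (Int.castRingHom R))ᵀ + Q.map (Int.castRingHom R)) =
      (Int.castRingHom R).mapMatrix (Qᵀ + Q) := by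
    ext i j; simp
  rw [h1, ← RingHom.map_adjugate]
  simp [dotProduct, Matrix.mulVec]

lemma cast_unit (p t : ℕ) (X : ℤ) (h : IsCoprime (p : ℤ) X) : IsUnit (X : ZMod (p ^ t)) := by
  have h1 := (h.pow_left (m := t)).map (Int.castRingHom (ZMod (p ^ t)))
  have h2 : (Int.castRingHom (ZMod (p ^ t))) ((p : ℤ) ^ t) = 0 := by
    have : ((p ^ t : ℕ) : ZMod (p ^ t)) = 0 := ZMod.natCast_self _
    rw [← this]; push_cast; simp only [map_pow, eq_intCast, Int.cast_natCast]
  rw [h2, isCoprime_zero_left] at h1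
  simpa using h1

theorem stmt7 (ℓ : ℕ) (hℓ : 1 ≤ ℓ) (Q : Matrix (Fin ℓ) (Fin ℓ) ℤ) (b : Fin ℓ → ℤ) (c : ℤ)
    (hΔ : (Qᵀ + Q).det ≠ 0)
    (p : ℕ) [Fact p.Prime]
    (hp : IsCoprime (p : ℤ)
      (2 * (Qᵀ + Q).det * (2 * c * (Qᵀ + Q).det - b ⬝ᵥ (Qᵀ + Q).adjugate.mulVec b))) :
    (Odd ℓ → SF ℓ Q b c p =
        (p : ℂ) ^ ((ℓ - 1) / 2) *
          (legendreSym p ((-1) ^ ((ℓ + 1) / 2) *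
            (2 * c * (Qᵀ + Q).det - b ⬝ᵥ (Qᵀ + Q).adjugate.mulVec b)) : ℂ)) ∧
    (Even ℓ → SF ℓ Q b c p =
        -((p : ℂ) ^ ((ℓ - 2) / 2) *
          (legendreSym p ((-1) ^ (ℓ / 2) * (Qᵀ + Q).det) : ℂ))) ∧
    (∀ t : ℕ, 2 ≤ t → SF ℓ Q b c (p ^ t) = 0) := by
  have hpp : p.Prime := Fact.out
  have hpR := hp.of_mul_right_right
  have hpΔ := hp.of_mul_right_left.of_mul_right_right
  have hp2' := hp.of_mul_right_left.of_mul_right_left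
  have hfield : ∀ X : ℤ, IsCoprime (p : ℤ) X → (X : ZMod p) ≠ 0 := by
    intro X hX h0
    rw [ZMod.intCast_zmod_eq_zero_iff_dvd] at h0
    have := hX.isUnit_of_dvd' dvd_rfl h0
    exact hpp.one_lt.ne' (by simpa using Int.isUnit_iff_natAbs_eq.1 this)
  have h2 : (2 : ZMod p) ≠ 0 := by exact_mod_cast hfield 2 hp2'
  have hp2 : p ≠ 2 := by
    rintro rfl
    exact h2 (ZMod.natCast_self 2)
  have hi : (2 : ZMod p) * 2⁻¹ = 1 := mul_inv_cancel₀ h2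
  have hi0 : (2⁻¹ : ZMod p) ≠ 0 := inv_ne_zero h2
  have hΔp := hfield _ hpΔ
  have hRp := hfield _ hpR
  have hp0 : (p : ℂ) ≠ 0 := Nat.cast_ne_zero.2 hpp.ne_zero
  rw [cast_det] at hΔp
  obtain ⟨ρ, hρ, hsum⟩ := total_sum p hp2 (Q.map (Int.castRingHom (ZMod p)))
    (fun i => (b i : ZMod p)) (c : ZMod p) hΔp hi
  rw [← cast_root, ← cast_det] at hρ
  rw [← cast_det] at hΔp
  rw [← cast_det] at hsum
  have hρ0 : ρ ≠ 0 := by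
    rintro rfl
    rw [mul_zero] at hρ
    exact hRp hρ.symm
  have hS : SF ℓ Q b c p = (p : ℂ)⁻¹ * ∑ a : (ZMod p)ˣ,
      (ZMod.stdAddChar ((a : ZMod p) * ρ) * (qc p ((a : ZMod p) * 2⁻¹) ^ ℓ *
        qc p ((Qᵀ + Q).det : ℤ) * gs p ^ ℓ)) := by
    rw [SF_eq]
    congr 1
    exact Finset.sum_congr rfl fun a _ => hsum a a.ne_zero
  refine ⟨?_, ?_, ?_⟩
  · rintro ⟨m, rfl⟩
    rw [hS, qc_legendre]
    have e1 : (2 * m + 1 - 1) / 2 = m := by omega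
    have e2 : (2 * m + 1 + 1) / 2 = m + 1 := by omega
    rw [e1, e2]
    have hterm : ∀ a : (ZMod p)ˣ,
        (ZMod.stdAddChar ((a : ZMod p) * ρ) * (qc p ((a : ZMod p) * 2⁻¹) ^ (2 * m + 1) *
        qc p ((Qᵀ + Q).det : ℤ) * gs p ^ (2 * m + 1)) : ℂ) =
        (qc p (2⁻¹ * ((Qᵀ + Q).det : ℤ)) * gs p ^ (2 * m + 1)) *
          (fun x : ZMod p => qc p x * ZMod.stdAddChar (x * ρ)) a := by
      intro a
      rw [pow_succ (qc p _), pow_mul (qc p _), qc_sq p (mul_ne_zero a.ne_zero hi0), one_pow,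
        map_mul (qc p), map_mul (qc p)]
      ring
    rw [Finset.sum_congr rfl fun a _ => hterm a, ← Finset.mul_sum,
      sum_units_field p (fun x : ZMod p => qc p x * ZMod.stdAddChar (x * ρ))]
    simp only [gs_shift p hρ0, MulChar.map_zero, zero_mul, sub_zero]
    have hχ : qc p (2⁻¹ * ((Qᵀ + Q).det : ℤ)) * qc p ρ =
        qc p ((2 * c * (Qᵀ + Q).det - b ⬝ᵥ (Qᵀ + Q).adjugate.mulVec b : ℤ) : ZMod p) := by
      rw [← hρ, ← map_mul]
      have : (2 * (((Qᵀ + Q).det : ℤ) : ZMod p) * ρ) =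
          2 ^ 2 * (2⁻¹ * ((Qᵀ + Q).det : ℤ) * ρ) := by
        linear_combination (-2 * (((Qᵀ + Q).det : ℤ) : ZMod p) * ρ) * hi
      rw [this, map_mul (qc p) (2 ^ 2), map_pow, qc_sq p h2, one_mul]
    have hg : gs p ^ (2 * m + 1) * gs p = qc p (-1) ^ (m + 1) * (p : ℂ) ^ (m + 1) := by
      rw [← pow_succ, show 2 * m + 1 + 1 = 2 * (m + 1) by ring, pow_mul, gs_sq p hp2, mul_pow]
    rw [Int.cast_mul, map_mul (qc p) (((-1) ^ (m + 1) : ℤ) : ZMod p), ← hχ, Int.cast_pow, map_pow, Int.cast_neg, Int.cast_one]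
    generalize qc p (2⁻¹ * ((Qᵀ + Q).det : ℤ)) = X
    field_simp
    linear_combination (X * qc p ρ) * hg
  · rintro ⟨m, hm⟩
    obtain rfl : ℓ = 2 * m := by omega
    rw [hS, qc_legendre]
    obtain ⟨m, rfl⟩ : ∃ k, m = k + 1 := ⟨m - 1, by omega⟩
    have e1 : (2 * (m + 1) - 2) / 2 = m := by omega
    have e2 : (2 * (m + 1)) / 2 = m + 1 := by omega
    rw [e1, e2]
    have hterm : ∀ a : (ZMod p)ˣ,
        (ZMod.stdAddChar ((a : ZMod p) * ρ) * (qc p ((a : ZMod p) * 2⁻¹) ^ (2 * (m + 1)) *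
        qc p ((Qᵀ + Q).det : ℤ) * gs p ^ (2 * (m + 1))) : ℂ) =
        (qc p ((Qᵀ + Q).det : ℤ) * gs p ^ (2 * (m + 1))) *
          (fun x : ZMod p => (ZMod.stdAddChar (x * ρ) : ℂ)) a := by
      intro a
      rw [pow_mul (qc p _), qc_sq p (mul_ne_zero a.ne_zero hi0), one_pow]
      ring
    rw [Finset.sum_congr rfl fun a _ => hterm a, ← Finset.mul_sum,
      sum_units_field p (fun x : ZMod p => (ZMod.stdAddChar (x * ρ) : ℂ))]
    simp only [AddChar.sum_mulShift ρ (ZMod.isPrimitive_stdAddChar p), if_neg hρ0, zero_mul,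
      AddChar.map_zero_eq_one]
    have hg : gs p ^ (2 * (m + 1)) = qc p (-1) ^ (m + 1) * (p : ℂ) ^ (m + 1) := by
      rw [pow_mul, gs_sq p hp2, mul_pow]
    rw [hg, Int.cast_mul, map_mul, Int.cast_pow, map_pow, Int.cast_neg, Int.cast_one]
    field_simp
    push_cast
    ring
  · intro t ht
    rw [SF_eq, high_power p t ht, mul_zero]
    rw [← cast_root]
    exact cast_unit p t _ hpR
end
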